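/- Let d ≥ 2, let 𝕊^d be the unit sphere in ℝ^{d+1} with the Euclidean metric, and let γ_d := Γ((d+1)/2)/(Γ(d/2)Γ(1/2)). Then the N-point best-packing distance of 𝕊^d satisfies δ_N(𝕊^d) ≥ (d/γ_d)^{1/d} N^{−1/d} for all N ≥ 2. -/

import Mathlib

open Metric MeasureTheory Filter
open scoped ENNReal NNReal

noncomputable section

variable {A : Type*} [MetricSpace A]

/-- The separation distance `δ(ω_N)` of a configuration of `N` points. -/
def sepDist {N : ℕ} (x : Fin N → A) : ℝ :=
  sInf {d : ℝ | ∃ i j : Fin N, i ≠ j ∧ d = dist (x i) (x j)}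

/-- The mesh norm (covering radius) `ρ(ω_N, K)` of a configuration with respect to `K`. -/
def meshNorm {N : ℕ} (x : Fin N → A) (K : Set A) : ℝ :=
  sSup {d : ℝ | ∃ y ∈ K, d = ⨅ i : Fin N, dist y (x i)}

/-- The weighted Riesz `(s,w)`-energy of a configuration. -/
def rieszEnergy {N : ℕ} (s : ℝ) (w : A → A → ℝ) (x : Fin N → A) : ℝ :=
  ∑ i : Fin N, ∑ j : Fin N, if i = j then 0 else w (x i) (x j) / dist (x i) (x j) ^ s

/-- `x` is an `N`-point `(s,w)`-energy minimizing configuration on `K`. -/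
def IsEnergyMinimizer {N : ℕ} (s : ℝ) (w : A → A → ℝ) (K : Set A) (x : Fin N → A) : Prop :=
  Function.Injective x ∧ (∀ i, x i ∈ K) ∧
    ∀ y : Fin N → A, Function.Injective y → (∀ i, y i ∈ K) →
      rieszEnergy s w x ≤ rieszEnergy s w y

/-- The `N`-point best-packing distance `δ_N(K)`. -/
def bestPackingDist (K : Set A) (N : ℕ) : ℝ :=
  sSup {d : ℝ | ∃ x : Fin N → A, Function.Injective x ∧ (∀ i, x i ∈ K) ∧ d = sepDist x}

/-- The `N`-point mesh norm `ρ_N(K)`. -/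
def meshNormN (K : Set A) (N : ℕ) : ℝ :=
  sInf {d : ℝ | ∃ x : Fin N → A, Function.Injective x ∧ (∀ i, x i ∈ K) ∧ d = meshNorm x K}

/-- The minimal `N`-point `(s,w)`-energy `𝓔_s^w(N,K)`. -/
def minEnergy (s : ℝ) (w : A → A → ℝ) (K : Set A) (N : ℕ) : ℝ :=
  sInf {E : ℝ | ∃ x : Fin N → A, Function.Injective x ∧ (∀ i, x i ∈ K) ∧ E = rieszEnergy s w x}

/-- `μ` is upper `α`-regular with constant `C₀`. -/
def IsUpperRegular [MeasurableSpace A] (μ : Measure A) (α C₀ : ℝ) : Prop :=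
  ∀ (x : A) (r : ℝ), 0 < r → r ≤ diam (Set.univ : Set A) →
    μ (closedBall x r) ≤ ENNReal.ofReal (C₀ * r ^ α)

/-- `μ` is lower `α`-regular with constant `c₀`. -/
def IsLowerRegular [MeasurableSpace A] (μ : Measure A) (α c₀ : ℝ) : Prop :=
  ∀ (x : A) (r : ℝ), 0 < r → r ≤ diam (Set.univ : Set A) →
    ENNReal.ofReal (c₀⁻¹ * r ^ α) ≤ μ (closedBall x r)

/-- `w` is an SLP weight on `K`: symmetric, lower semi-continuous on `K × K`,
nonnegative, and positive on the diagonal. -/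
def IsSLPWeight (w : A → A → ℝ) (K : Set A) : Prop :=
  (∀ x ∈ K, ∀ y ∈ K, 0 ≤ w x y) ∧
  (∀ x ∈ K, ∀ y ∈ K, w x y = w y x) ∧
  LowerSemicontinuousOn (fun p : A × A => w p.1 p.2) (K ×ˢ K) ∧
  (∀ x ∈ K, 0 < w x x)

/-- The constant `γ_d = Γ((d+1)/2)/(Γ(d/2)Γ(1/2))`. -/
def gammaD (d : ℕ) : ℝ :=
  Real.Gamma (((d : ℝ) + 1) / 2) / (Real.Gamma ((d : ℝ) / 2) * Real.Gamma (1 / 2))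

open Module Set

theorem lintegral_fun_norm_addHaar {E : Type*} [NormedAddCommGroup E] [NormedSpace ℝ E]
    [MeasurableSpace E] [BorelSpace E] [FiniteDimensional ℝ E] [Nontrivial E]
    (μ : Measure E) [μ.IsAddHaarMeasure] {f : ℝ → ℝ≥0∞} (hf : Measurable f) :
    ∫⁻ x, f ‖x‖ ∂μ = finrank ℝ E * μ (ball 0 1) *
      ∫⁻ y in Ioi (0 : ℝ), ENNReal.ofReal (y ^ (finrank ℝ E - 1)) * f y := by
  calc
    ∫⁻ x, f ‖x‖ ∂μ = ∫⁻ x : ({(0)}ᶜ : Set E), f ‖x.1‖ ∂(μ.comap (↑)) := by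
      rw [lintegral_subtype_comap (measurableSet_singleton _).compl fun x ↦ f ‖x‖,
        restrict_compl_singleton]
    _ = ∫⁻ x, f x.2 ∂μ.toSphere.prod (.volumeIoiPow (finrank ℝ E - 1)) := by
      simpa using μ.measurePreserving_homeomorphUnitSphereProd.lintegral_comp_emb
        (Homeomorph.measurableEmbedding _) (f ∘ Subtype.val ∘ Prod.snd)
    _ = μ.toSphere univ * ∫⁻ x : Ioi (0 : ℝ), f x ∂.volumeIoiPow (finrank ℝ E - 1) := by
      rw [lintegral_prod _ (by fun_prop)]
      simp [mul_comm]
    _ = _ := by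
      rw [Measure.volumeIoiPow, lintegral_withDensity_eq_lintegral_mul _ (by fun_prop) (by fun_prop),
        μ.toSphere_apply_univ]
      simp only [Pi.mul_apply]
      rw [lintegral_subtype_comap measurableSet_Ioi
        fun a ↦ ENNReal.ofReal (a ^ (finrank ℝ E - 1)) * f a]

theorem integral_sin_pow_le {n : ℕ} (hn : n ≠ 0) {θ : ℝ} (h0 : 0 ≤ θ) (hπ : θ ≤ Real.pi) :
    ∫ φ in (0 : ℝ)..θ, Real.sin φ ^ n ≤ (2 * Real.sin (θ / 2)) ^ (n + 1) / (n + 1) := by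
  have hderiv : ∀ x ∈ uIcc 0 θ, HasDerivAt (fun x => (2 * Real.sin (x / 2)) ^ (n + 1) / (n + 1))
      ((2 * Real.sin (x / 2)) ^ n * Real.cos (x / 2)) x := by
    intro x _
    have h := ((((Real.hasDerivAt_sin (x / 2)).comp x ((hasDerivAt_id x).div_const 2)).const_mul
      2).pow (n + 1)).div_const ((n : ℝ) + 1)
    refine h.congr_deriv ?_
    have : (n : ℝ) + 1 ≠ 0 := by positivity
    simp
    field_simp
  have hint := intervalIntegral.integral_eq_sub_of_hasDerivAt hderiv
    (Continuous.intervalIntegrable (by fun_prop) _ _)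
  simp only [zero_div, Real.sin_zero, mul_zero, ne_eq, Nat.add_eq_zero_iff, one_ne_zero, and_false,
    not_false_eq_true, zero_pow, sub_zero] at hint
  rw [← hint]
  refine intervalIntegral.integral_mono_on h0 (Continuous.intervalIntegrable (by fun_prop) _ _)
    (Continuous.intervalIntegrable (by fun_prop) _ _) fun x hx => ?_
  have hs : 0 ≤ Real.sin (x / 2) :=
    Real.sin_nonneg_of_nonneg_of_le_pi (by linarith [hx.1]) (by linarith [hx.1, hx.2])
  have hc : 0 ≤ Real.cos (x / 2) :=
    Real.cos_nonneg_of_neg_pi_div_two_le_of_le (by linarith [hx.1]) (by linarith [hx.2])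
  have hx2 : Real.sin x = 2 * Real.sin (x / 2) * Real.cos (x / 2) := by
    rw [← Real.sin_two_mul]; ring_nf
  rw [hx2, mul_pow]
  gcongr
  exact pow_le_of_le_one hc (Real.cos_le_one _) hn

/-- The planar half-sector swept by the points `(t, s)`, `s > 0`, of the unit disc whose angle `φ`
with the first axis satisfies `c < cos φ`. -/
def sector (c : ℝ) : Set (ℝ × ℝ) :=
  {p | 0 < p.2 ∧ p.1 ^ 2 + p.2 ^ 2 < 1 ∧ c * √(p.1 ^ 2 + p.2 ^ 2) < p.1}

theorem measurableSet_sector (c : ℝ) : MeasurableSet (sector c) := by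
  have h1 : IsOpen {p : ℝ × ℝ | 0 < p.2} := isOpen_lt (by fun_prop) (by fun_prop)
  have h2 : IsOpen {p : ℝ × ℝ | p.1 ^ 2 + p.2 ^ 2 < 1} := isOpen_lt (by fun_prop) (by fun_prop)
  have h3 : IsOpen {p : ℝ × ℝ | c * √(p.1 ^ 2 + p.2 ^ 2) < p.1} :=
    isOpen_lt (by fun_prop) (by fun_prop)
  exact (h1.inter (h2.inter h3)).measurableSet

theorem lintegral_sector_le {n : ℕ} (hn : n ≠ 0) {r : ℝ} (hr : 0 ≤ r) :
    ∫⁻ p in sector (1 - r ^ 2 / 2), ENNReal.ofReal (p.2 ^ n) ≤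
      ENNReal.ofReal (r ^ (n + 1) / ((n + 1) * (n + 2))) := by
  set θ := 2 * Real.arcsin (r / 2) with hθ
  have hθ0 : 0 ≤ θ := by have := Real.arcsin_nonneg.2 (by positivity : 0 ≤ r / 2); positivity
  have hθπ : θ ≤ Real.pi := by have := Real.arcsin_le_pi_div_two (r / 2); linarith
  rw [← lintegral_indicator (measurableSet_sector _), ← lintegral_comp_polarCoord_symm]
  calc
    _ ≤ ∫⁻ p in polarCoord.target,
          (Ioo (0 : ℝ) 1).indicator (fun ρ => ENNReal.ofReal (ρ ^ (n + 1))) p.1 *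
          (Ioo (0 : ℝ) θ).indicator (fun φ => ENNReal.ofReal (Real.sin φ ^ n)) p.2 := by
      refine setLIntegral_mono' polarCoord.open_target.measurableSet ?_
      rintro ⟨ρ, φ⟩ ⟨hρ, hφ⟩
      simp only [mem_Ioi] at hρ
      by_cases hmem : polarCoord.symm (ρ, φ) ∈ sector (1 - r ^ 2 / 2)
      swap
      · rw [indicator_of_notMem hmem, smul_zero]
        exact zero_le
      have hsq : (ρ * Real.cos φ) ^ 2 + (ρ * Real.sin φ) ^ 2 = ρ ^ 2 := by
        linear_combination ρ ^ 2 * Real.cos_sq_add_sin_sq φ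
      have hmem' := hmem
      simp only [sector, polarCoord_symm_apply, mem_ofPred_eq, hsq, Real.sqrt_sq hρ.le] at hmem'
      obtain ⟨h1, h2, h3⟩ := hmem'
      have hρ1 : ρ < 1 := by nlinarith
      have hsin : 0 < Real.sin φ := by
        by_contra! h
        nlinarith
      have hcos : 1 - r ^ 2 / 2 < Real.cos φ := by
        by_contra! h
        nlinarith
      have hφ0 : 0 < φ := by
        by_contra! h
        exact absurd (Real.sin_nonpos_of_nonpos_of_neg_pi_le h hφ.1.le) (not_le.2 hsin)
      have hφθ : φ < θ := by
        have hcos2 : Real.cos φ = 1 - 2 * Real.sin (φ / 2) ^ 2 := by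
          have := Real.cos_two_mul' (φ / 2)
          have h2 := Real.cos_sq_add_sin_sq (φ / 2)
          rw [show 2 * (φ / 2) = φ by ring] at this
          linarith
        have hlt : Real.sin (φ / 2) < r / 2 := by
          refine lt_of_pow_lt_pow_left₀ 2 (by positivity) ?_
          nlinarith
        have := (Real.lt_arcsin_iff_sin_lt' (x := φ / 2) (y := r / 2)
          ⟨by linarith [Real.pi_pos], by linarith [hφ.2]⟩).2 hlt
        linarith
      rw [indicator_of_mem hmem, indicator_of_mem (show ρ ∈ Ioo (0 : ℝ) 1 from ⟨hρ, hρ1⟩),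
        indicator_of_mem (show φ ∈ Ioo (0 : ℝ) θ from ⟨hφ0, hφθ⟩), smul_eq_mul,
        ← ENNReal.ofReal_mul hρ.le, ← ENNReal.ofReal_mul (by positivity)]
      refine le_of_eq ?_
      congr 1
      simp only [polarCoord_symm_apply]
      ring
    _ ≤ ∫⁻ p : ℝ × ℝ, (Ioo (0 : ℝ) 1).indicator (fun ρ => ENNReal.ofReal (ρ ^ (n + 1))) p.1 *
          (Ioo (0 : ℝ) θ).indicator (fun φ => ENNReal.ofReal (Real.sin φ ^ n)) p.2 :=
      setLIntegral_le_lintegral _ _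
    _ = (∫⁻ ρ in Ioo (0 : ℝ) 1, ENNReal.ofReal (ρ ^ (n + 1))) *
          ∫⁻ φ in Ioo 0 θ, ENNReal.ofReal (Real.sin φ ^ n) := by
      rw [← lintegral_indicator measurableSet_Ioo, ← lintegral_indicator measurableSet_Ioo]
      exact lintegral_prod_mul
        (Measurable.indicator (by fun_prop) measurableSet_Ioo).aemeasurable
        (Measurable.indicator (by fun_prop) measurableSet_Ioo).aemeasurable
    _ = ENNReal.ofReal (∫ ρ in (0 : ℝ)..1, ρ ^ (n + 1)) *
          ENNReal.ofReal (∫ φ in (0 : ℝ)..θ, Real.sin φ ^ n) := by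
      congr 1
      · rw [intervalIntegral.integral_of_le zero_le_one, integral_Ioc_eq_integral_Ioo,
          ofReal_integral_eq_lintegral_ofReal]
        · exact ((continuous_pow (n + 1)).integrableOn_Icc).mono_set Ioo_subset_Icc_self
        · filter_upwards [ae_restrict_mem measurableSet_Ioo] with x hx
          exact pow_nonneg hx.1.le _
      · rw [intervalIntegral.integral_of_le hθ0, integral_Ioc_eq_integral_Ioo,
          ofReal_integral_eq_lintegral_ofReal]
        · exact ((Real.continuous_sin.pow n).integrableOn_Icc).mono_set Ioo_subset_Icc_self
        · filter_upwards [ae_restrict_mem measurableSet_Ioo] with x hx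
          exact pow_nonneg (Real.sin_nonneg_of_nonneg_of_le_pi hx.1.le (hx.2.le.trans hθπ)) _
    _ ≤ _ := by
      rw [← ENNReal.ofReal_mul (by simp; positivity)]
      refine ENNReal.ofReal_le_ofReal ?_
      have hsin : Real.sin (θ / 2) ≤ r / 2 := by
        rw [hθ, mul_div_cancel_left₀ _ (two_ne_zero)]
        rcases le_total (r / 2) 1 with h | h
        · exact (Real.sin_arcsin (by linarith) h).le
        · exact (Real.sin_le_one _).trans h
      have hsin0 : 0 ≤ Real.sin (θ / 2) :=
        Real.sin_nonneg_of_nonneg_of_le_pi (by linarith) (by linarith)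
      calc _ ≤ (1 / (n + 2)) * ((2 * Real.sin (θ / 2)) ^ (n + 1) / (n + 1)) := by
            rw [integral_pow]
            have : ((1 : ℝ) ^ (n + 1 + 1) - 0 ^ (n + 1 + 1)) / ((n + 1 : ℕ) + 1) = 1 / (n + 2) := by
              push_cast; simp; ring
            rw [this]
            gcongr
            exact integral_sin_pow_le hn hθ0 hθπ
        _ ≤ (1 / (n + 2)) * (r ^ (n + 1) / (n + 1)) := by
            gcongr; linarith
        _ = _ := by field_simp

/-- The open cone in the unit ball of the vectors whose angle `φ` with `e` has `c < cos φ`. -/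
def ballCone {E : Type*} [NormedAddCommGroup E] [InnerProductSpace ℝ E] (e : E) (c : ℝ) : Set E :=
  {x | ‖x‖ < 1 ∧ c * ‖x‖ < inner ℝ e x}

section Cone

variable {E : Type*} [NormedAddCommGroup E] [InnerProductSpace ℝ E]

theorem isOpen_ballCone (e : E) (c : ℝ) : IsOpen (ballCone e c) := by
  have h1 : IsOpen {x : E | ‖x‖ < 1} := isOpen_lt (by fun_prop) (by fun_prop)
  have h2 : IsOpen {x : E | c * ‖x‖ < inner ℝ e x} := isOpen_lt (by fun_prop) (by fun_prop)
  exact h1.inter h2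

theorem norm_smul_add_orthogonal {e : E} (he : ‖e‖ = 1) (t : ℝ) (y : (ℝ ∙ e)ᗮ) :
    ‖t • e + (y : E)‖ = √(t ^ 2 + ‖y‖ ^ 2) := by
  have hy : inner ℝ e (y : E) = 0 := Submodule.mem_orthogonal_singleton_iff_inner_right.1 y.2
  rw [eq_comm, Real.sqrt_eq_iff_mul_self_eq (by positivity) (norm_nonneg _),
    norm_add_mul_self_real, inner_smul_left, hy, norm_smul, he]
  simp [sq]

theorem inner_smul_add_orthogonal {e : E} (he : ‖e‖ = 1) (t : ℝ) (y : (ℝ ∙ e)ᗮ) :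
    inner ℝ e (t • e + (y : E)) = t := by
  have hy : inner ℝ e (y : E) = 0 := Submodule.mem_orthogonal_singleton_iff_inner_right.1 y.2
  rw [inner_add_right, hy, inner_smul_right, real_inner_self_eq_norm_sq, he]
  simp

theorem mem_ballCone_of_dist_lt {e x : E} (he : ‖e‖ = 1) (hx1 : ‖x‖ < 1) (hx0 : x ≠ 0) {r : ℝ}
    (h : dist (‖x‖⁻¹ • x) e < r) : x ∈ ballCone e (1 - r ^ 2 / 2) := by
  have hx : 0 < ‖x‖ := norm_pos_iff.2 hx0
  refine ⟨hx1, ?_⟩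
  have hsq : dist (‖x‖⁻¹ • x) e ^ 2 < r ^ 2 := by gcongr
  rw [dist_eq_norm, norm_sub_sq_real, norm_smul, he, inner_smul_left, real_inner_comm] at hsq
  simp only [norm_inv, norm_norm, inv_mul_cancel₀ hx.ne', conj_trivial] at hsq
  have : 1 - r ^ 2 / 2 < ‖x‖⁻¹ * inner ℝ e x := by linarith
  rwa [inv_mul_eq_div, lt_div_iff₀ hx] at this

variable [FiniteDimensional ℝ E] [MeasurableSpace E] [BorelSpace E]

theorem measurePreserving_smul_add_orthogonal {e : E} (he : ‖e‖ = 1) :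
    MeasurePreserving fun p : ℝ × (ℝ ∙ e)ᗮ => p.1 • e + (p.2 : E) := by
  let L : WithLp 2 (ℝ × (ℝ ∙ e)ᗮ) →ₗᵢ[ℝ] E :=
    { toFun := fun p => p.fst • e + (p.snd : E)
      map_add' := fun p q => by simp [add_smul]; abel
      map_smul' := fun a p => by simp [mul_smul]
      norm_map' := fun p => by
        simp [norm_smul_add_orthogonal he, WithLp.prod_norm_eq_of_L2] }
  have he0 : e ≠ 0 := by rintro rfl; simp at he
  have hdim : finrank ℝ (WithLp 2 (ℝ × (ℝ ∙ e)ᗮ)) = finrank ℝ E := by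
    rw [(WithLp.linearEquiv 2 ℝ (ℝ × (ℝ ∙ e)ᗮ)).finrank_eq, finrank_prod,
      ← Submodule.finrank_add_finrank_orthogonal (ℝ ∙ e), finrank_span_singleton he0, finrank_self]
  exact (L.toLinearIsometryEquiv hdim).measurePreserving.comp
    (WithLp.volume_preserving_toLp ℝ (ℝ ∙ e)ᗮ)

theorem volume_ballCone_le {d : ℕ} (hd : 2 ≤ d) (hE : finrank ℝ E = d + 1) {e : E} (he : ‖e‖ = 1)
    {r : ℝ} (hr : 0 ≤ r) :
    volume (ballCone e (1 - r ^ 2 / 2)) ≤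
      ENNReal.ofReal (√Real.pi ^ d / Real.Gamma (d / 2 + 1) * (r ^ d / (d + 1))) := by
  have he0 : e ≠ 0 := by rintro rfl; simp at he
  have hF : finrank ℝ (ℝ ∙ e)ᗮ = d := by
    have := Submodule.finrank_add_finrank_orthogonal (ℝ ∙ e)
    rw [finrank_span_singleton he0, hE] at this
    omega
  have : Nontrivial (ℝ ∙ e)ᗮ := Module.nontrivial_of_finrank_pos (R := ℝ) (by omega)
  obtain ⟨n, rfl⟩ : ∃ n, d = n + 1 := ⟨d - 1, by omega⟩
  set c := 1 - r ^ 2 / 2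
  let U : Set (ℝ × ℝ) := {p | p.1 ^ 2 + p.2 ^ 2 < 1 ∧ c * √(p.1 ^ 2 + p.2 ^ 2) < p.1}
  have hU : MeasurableSet U := by
    have h2 : IsOpen {p : ℝ × ℝ | p.1 ^ 2 + p.2 ^ 2 < 1} := isOpen_lt (by fun_prop) (by fun_prop)
    have h3 : IsOpen {p : ℝ × ℝ | c * √(p.1 ^ 2 + p.2 ^ 2) < p.1} :=
      isOpen_lt (by fun_prop) (by fun_prop)
    exact (h2.inter h3).measurableSet
  have hUi : Measurable (U.indicator (1 : ℝ × ℝ → ℝ≥0∞)) := measurable_one.indicator hU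
  have hball : volume (ball (0 : (ℝ ∙ e)ᗮ) 1) =
      ENNReal.ofReal (√Real.pi ^ (n + 1) / Real.Gamma ((n + 1 : ℕ) / 2 + 1)) := by
    rw [InnerProductSpace.volume_ball, hF]
    simp
  have hpre : (fun p : ℝ × (ℝ ∙ e)ᗮ => p.1 • e + (p.2 : E)) ⁻¹' ballCone e c =
      (fun p : ℝ × (ℝ ∙ e)ᗮ => (p.1, ‖p.2‖)) ⁻¹' U := by
    ext p
    simp only [ballCone, mem_preimage, mem_ofPred_eq, norm_smul_add_orthogonal he,
      inner_smul_add_orthogonal he, U]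
    rw [Real.sqrt_lt' one_pos, one_pow]
  have hmeas : Measurable fun p : ℝ × (ℝ ∙ e)ᗮ => (p.1, ‖p.2‖) := by fun_prop
  rw [← (measurePreserving_smul_add_orthogonal he).measure_preimage
    (isOpen_ballCone e c).measurableSet.nullMeasurableSet, hpre,
    ← lintegral_indicator_one (hmeas hU), Measure.volume_eq_prod,
    lintegral_prod _ (measurable_one.indicator (hmeas hU)).aemeasurable]
  calc
    _ = ∫⁻ t : ℝ, ∫⁻ y : (ℝ ∙ e)ᗮ, U.indicator 1 (t, ‖y‖) := rfl
    _ = ∫⁻ t : ℝ, (n + 1 : ℕ) * volume (ball (0 : (ℝ ∙ e)ᗮ) 1) *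
          ∫⁻ s in Ioi (0 : ℝ), ENNReal.ofReal (s ^ n) * U.indicator 1 (t, s) := by
      refine lintegral_congr fun t => ?_
      rw [lintegral_fun_norm_addHaar volume (f := fun s => U.indicator 1 (t, s))
        (hUi.comp measurable_prodMk_left), hF]
      rfl
    _ = (n + 1 : ℕ) * volume (ball (0 : (ℝ ∙ e)ᗮ) 1) *
          ∫⁻ t : ℝ, ∫⁻ s : ℝ, (sector c).indicator (fun p => ENNReal.ofReal (p.2 ^ n)) (t, s) := by
      rw [lintegral_const_mul' _ _ (by rw [hball]; finiteness)]
      congr 1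
      refine lintegral_congr fun t => ?_
      rw [← lintegral_indicator measurableSet_Ioi]
      refine lintegral_congr fun s => ?_
      have hiff : (t, s) ∈ sector c ↔ s ∈ Ioi (0 : ℝ) ∧ (t, s) ∈ U := Iff.rfl
      by_cases h1 : s ∈ Ioi (0 : ℝ) <;> by_cases h2 : (t, s) ∈ U <;>
        simp only [indicator, hiff, h1, h2] <;> simp
    _ = (n + 1 : ℕ) * volume (ball (0 : (ℝ ∙ e)ᗮ) 1) *
          ∫⁻ p in sector c, ENNReal.ofReal (p.2 ^ n) := by
      rw [← lintegral_indicator (measurableSet_sector c), Measure.volume_eq_prod, lintegral_prod _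
        (Measurable.indicator (by fun_prop) (measurableSet_sector c)).aemeasurable]
    _ ≤ (n + 1 : ℕ) * volume (ball (0 : (ℝ ∙ e)ᗮ) 1) *
          ENNReal.ofReal (r ^ (n + 1) / ((n + 1) * (n + 2))) := by
      gcongr
      exact lintegral_sector_le (by omega) hr
    _ = _ := by
      have hG : 0 < Real.Gamma ((n + 1 : ℕ) / 2 + 1) := Real.Gamma_pos_of_pos (by positivity)
      rw [hball, ← ENNReal.ofReal_natCast, ← ENNReal.ofReal_mul (by positivity),
        ← ENNReal.ofReal_mul (by positivity)]
      congr 1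
      push_cast
      field_simp
      ring

end Cone

theorem volume_unitBall_eq_gammaD {d : ℕ} (hd : 2 ≤ d) :
    √Real.pi ^ (d + 1) / Real.Gamma ((d + 1 : ℕ) / 2 + 1) =
      √Real.pi ^ d / Real.Gamma (d / 2 + 1) * (d / gammaD d / (d + 1)) := by
  have hd0 : (0 : ℝ) < d := by positivity
  have h1 := Real.Gamma_pos_of_pos (show 0 < ((d : ℝ) + 1) / 2 by positivity)
  have h2 := Real.Gamma_pos_of_pos (show 0 < (d : ℝ) / 2 by positivity)
  rw [gammaD, Real.Gamma_one_half_eq, Real.Gamma_add_one (by positivity),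
    Real.Gamma_add_one (by positivity)]
  push_cast
  have := Real.pi_pos
  field_simp
  rw [pow_succ]

theorem gammaD_pos {d : ℕ} (hd : 2 ≤ d) : 0 < gammaD d := by
  have hd0 : (0 : ℝ) < d := by positivity
  exact div_pos (Real.Gamma_pos_of_pos (by positivity))
    (mul_pos (Real.Gamma_pos_of_pos (by positivity)) (Real.Gamma_pos_of_pos (by positivity)))

/-- Fewer than `N` balls of radius `r` with `r ^ d = d / γ_d / N` do not cover the sphere. -/
theorem exists_mem_sphere_forall_le_dist {d k N : ℕ} (hd : 2 ≤ d) (hk : k < N) {r : ℝ} (hr : 0 ≤ r)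
    (hrd : r ^ d = d / gammaD d / N) (x : Fin k → EuclideanSpace ℝ (Fin (d + 1)))
    (hx : ∀ i, x i ∈ sphere 0 1) :
    ∃ y ∈ sphere (0 : EuclideanSpace ℝ (Fin (d + 1))) 1, ∀ i, r ≤ dist y (x i) := by
  by_contra! hcover
  have hsub : ball (0 : EuclideanSpace ℝ (Fin (d + 1))) 1 ⊆
      {0} ∪ ⋃ i, ballCone (x i) (1 - r ^ 2 / 2) := by
    intro y hy
    by_cases hy0 : y = 0
    · exact Or.inl hy0
    · obtain ⟨i, hi⟩ := hcover (‖y‖⁻¹ • y) (by simp [norm_smul, hy0])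
      exact Or.inr (mem_iUnion.2 ⟨i, mem_ballCone_of_dist_lt (by simpa using hx i)
        (by simpa using hy) hy0 hi⟩)
  have hγ := gammaD_pos hd
  have hG := Real.Gamma_pos_of_pos (show (0 : ℝ) < d / 2 + 1 by positivity)
  set V : ℝ := √Real.pi ^ d / Real.Gamma (d / 2 + 1) with hV
  have hVpos : 0 < V := by have := Real.pi_pos; positivity
  have hle : ENNReal.ofReal (V * (d / gammaD d / (d + 1))) ≤
      ENNReal.ofReal (k * (V * (r ^ d / (d + 1)))) := by
    calc
      _ = volume (ball (0 : EuclideanSpace ℝ (Fin (d + 1))) 1) := by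
        rw [InnerProductSpace.volume_ball, finrank_euclideanSpace_fin,
          volume_unitBall_eq_gammaD hd]
        simp [hV]
      _ ≤ volume ({0} ∪ ⋃ i, ballCone (x i) (1 - r ^ 2 / 2)) := measure_mono hsub
      _ ≤ volume {(0 : EuclideanSpace ℝ (Fin (d + 1)))} +
          ∑ i, volume (ballCone (x i) (1 - r ^ 2 / 2)) :=
        (measure_union_le _ _).trans (add_le_add_right (measure_iUnion_fintype_le _ _) _)
      _ ≤ 0 + ∑ _i : Fin k, ENNReal.ofReal (V * (r ^ d / (d + 1))) := by
        gcongr with i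
        · simp
        · exact volume_ballCone_le hd (by simp) (by simpa using hx i) hr
      _ = _ := by
        rw [ENNReal.ofReal_mul (Nat.cast_nonneg k)]
        simp
  rw [ENNReal.ofReal_le_ofReal_iff (by positivity), hrd] at hle
  have hN : (k : ℝ) < N := by exact_mod_cast hk
  have hN0 : (0 : ℝ) < N := lt_of_le_of_lt (by positivity) hN
  have hd0 : (0 : ℝ) < d := by positivity
  have : V * (d / gammaD d / (d + 1)) * (1 - k / N) ≤ 0 := by
    refine le_of_eq_of_le ?_ (sub_nonpos.2 hle)
    field_simp
  have hpos : 0 < 1 - (k : ℝ) / N := sub_pos.2 ((div_lt_one hN0).2 hN)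
  exact absurd this (not_le.2 (by positivity))

theorem exists_separated_of_greedy {α : Type*} [PseudoMetricSpace α] {S : Set α} {r : ℝ} {N : ℕ}
    (h : ∀ k < N, ∀ x : Fin k → α, (∀ i, x i ∈ S) → ∃ y ∈ S, ∀ i, r ≤ dist y (x i)) :
    ∃ x : Fin N → α, (∀ i, x i ∈ S) ∧ ∀ i j, i ≠ j → r ≤ dist (x i) (x j) := by
  suffices ∀ k ≤ N, ∃ x : Fin k → α, (∀ i, x i ∈ S) ∧ ∀ i j, i ≠ j → r ≤ dist (x i) (x j) from
    this N le_rfl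
  intro k
  induction k with
  | zero => exact fun _ => ⟨Fin.elim0, fun i => i.elim0, fun i => i.elim0⟩
  | succ k ih =>
    intro hk
    obtain ⟨x, hxS, hx⟩ := ih (by omega)
    obtain ⟨y, hyS, hy⟩ := h k (by omega) x hxS
    refine ⟨Fin.cons y x, Fin.cases hyS hxS, fun i j => ?_⟩
    cases i using Fin.cases <;> cases j using Fin.cases
    · simp
    · exact fun _ => by simpa using hy _
    · exact fun _ => by simpa [dist_comm] using hy _
    · simpa using hx _ _

theorem le_sepDist {α : Type*} [MetricSpace α] {N : ℕ} (hN : 2 ≤ N) {x : Fin N → α} {r : ℝ}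
    (h : ∀ i j, i ≠ j → r ≤ dist (x i) (x j)) : r ≤ sepDist x := by
  refine le_csInf ⟨_, ⟨0, by omega⟩, ⟨1, by omega⟩, by simp, rfl⟩ ?_
  rintro _ ⟨i, j, hij, rfl⟩
  exact h i j hij

theorem sepDist_le_dist {α : Type*} [MetricSpace α] {N : ℕ} {x : Fin N → α} {i j : Fin N}
    (hij : i ≠ j) : sepDist x ≤ dist (x i) (x j) := by
  refine csInf_le ⟨0, ?_⟩ ⟨i, j, hij, rfl⟩
  rintro _ ⟨i, j, -, rfl⟩
  exact dist_nonneg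

theorem le_bestPackingDist {α : Type*} [MetricSpace α] {K : Set α} (hK : Bornology.IsBounded K)
    {N : ℕ} (hN : 2 ≤ N) {r : ℝ} (hr : 0 < r) {x : Fin N → α} (hxK : ∀ i, x i ∈ K)
    (h : ∀ i j, i ≠ j → r ≤ dist (x i) (x j)) : r ≤ bestPackingDist K N := by
  have hinj : Function.Injective x := fun i j hij => by
    by_contra hne
    have := h i j hne
    rw [hij, dist_self] at this
    linarith
  refine (le_sepDist hN h).trans (le_csSup ⟨diam K, ?_⟩ ⟨x, hinj, hxK, rfl⟩)
  rintro _ ⟨z, -, hz, rfl⟩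
  exact (sepDist_le_dist (i := ⟨0, by omega⟩) (j := ⟨1, by omega⟩) (by simp)).trans
    (dist_le_diam_of_mem hK (hz _) (hz _))

/-- explicit lower bound for the `N`-point best-packing distance of
the sphere `𝕊^d`. -/
theorem stmt_16 (d : ℕ) (hd : 2 ≤ d) (N : ℕ) (hN : 2 ≤ N) :
    bestPackingDist (sphere (0 : EuclideanSpace ℝ (Fin (d + 1))) 1) N ≥
      ((d : ℝ) / gammaD d) ^ (1 / (d : ℝ)) * (N : ℝ) ^ (-(1 / (d : ℝ))) := by
  have hγ := gammaD_pos hd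
  have hd0 : (0 : ℝ) < d := by positivity
  have hN0 : (0 : ℝ) < N := by positivity
  set r := ((d : ℝ) / gammaD d) ^ (1 / (d : ℝ)) * (N : ℝ) ^ (-(1 / (d : ℝ)))
  have hr : 0 < r := by positivity
  have hrd : r ^ d = d / gammaD d / N := by
    rw [mul_pow, ← Real.rpow_natCast, ← Real.rpow_natCast, ← Real.rpow_mul (by positivity),
      ← Real.rpow_mul (by positivity), neg_mul, one_div_mul_cancel hd0.ne', Real.rpow_one,
      Real.rpow_neg_one, ← div_eq_mul_inv]
  obtain ⟨x, hxS, hx⟩ := exists_separated_of_greedy fun k hk x hx =>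
    exists_mem_sphere_forall_le_dist hd hk hr.le hrd x hx
  exact le_bestPackingDist isBounded_sphere hN hr hxS hx
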